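/- There exist universal constants C₁, C₂, C′, C₆, C₇ > 0 with the following property. Let ρ ∈ (0, 1/3), let N be an integer with C₁·n·log(1/ρ) ≤ N ≤ n^{10}, and fix r ∈ [C₂√n, n]. Let θ₁, …, θ_N be independent random vectors uniformly distributed on S^{n−1}. Then there exists q ≥ 1 − C′(ρ + n/r²) such that with probability at least 1 − e^{−5n}, for every η ∈ F_ρ and every t ∈ ℝ, F(η, t) ≤ C₆·√((n/N)·log(1/ρ)) + (1 + C₇(ρ + n/r² + (log n)²/n + 1/r)) · (√n/r) · φ(q·√n·t/r). -/

import Mathlib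

open MeasureTheory Metric Set
open scoped RealInnerProductSpace

/-- The uniform (rotation-invariant) probability measure on the unit sphere of `ℝⁿ`. -/
noncomputable def uniformSphere (n : ℕ) :
    Measure (sphere (0 : EuclideanSpace ℝ (Fin n)) 1) :=
  (((volume : Measure (EuclideanSpace ℝ (Fin n))).toSphere) Set.univ)⁻¹ •
    (volume : Measure (EuclideanSpace ℝ (Fin n))).toSphere

/-- `φ(r) = e^{−r²/2}`. -/
noncomputable def gphi (r : ℝ) : ℝ := Real.exp (-r ^ 2 / 2)

/-- `F(η,t) = (1/N) ∑_{k=1}^N φ(r⟨η,θ_k⟩ + t)`. -/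
noncomputable def Ffun {n N : ℕ} (r t : ℝ)
    (θ : Fin N → sphere (0 : EuclideanSpace ℝ (Fin n)) 1)
    (η : EuclideanSpace ℝ (Fin n)) : ℝ :=
  (1 / (N : ℝ)) * ∑ k : Fin N, gphi (r * ⟪η, (θ k : EuclideanSpace ℝ (Fin n))⟫ + t)

/-- The joint law of `N` independent uniform random points on `S^{n-1}`. -/
noncomputable def sphereProduct (n N : ℕ) :
    Measure (Fin N → sphere (0 : EuclideanSpace ℝ (Fin n)) 1) :=
  Measure.pi fun _ => uniformSphere n

/-- `x` has all coordinates integer multiples of `s`. -/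
def latticeVec (n : ℕ) (s : ℝ) (x : EuclideanSpace ℝ (Fin n)) : Prop :=
  ∀ i, ∃ m : ℤ, x i = s * m

/-- The net `F_ρ = ((1+ρ)B₂ⁿ \ (1−2ρ)B₂ⁿ) ∩ (ρ/√n)ℤⁿ`. -/
def Fnet (n : ℕ) (ρ : ℝ) : Set (EuclideanSpace ℝ (Fin n)) :=
  (closedBall (0 : EuclideanSpace ℝ (Fin n)) (1 + ρ) \ closedBall 0 (1 - 2 * ρ)) ∩
    {x | latticeVec n (ρ / Real.sqrt n) x}


lemma polar_aux {n : ℕ} (f : ℝ → ENNReal) (hf : Measurable f) (w : ℝ → ENNReal)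
    (hw : Measurable w) (hn : 0 < n) (η : EuclideanSpace ℝ (Fin n)) :
    ∫⁻ x : EuclideanSpace ℝ (Fin n), f (⟪η, x⟫ / ‖x‖) * w ‖x‖ =
      (∫⁻ θ : sphere (0 : EuclideanSpace ℝ (Fin n)) 1, f ⟪η, (θ : EuclideanSpace ℝ (Fin n))⟫
        ∂(volume : Measure (EuclideanSpace ℝ (Fin n))).toSphere) *
      ∫⁻ s : Ioi (0 : ℝ), w s ∂(Measure.volumeIoiPow (n - 1)) := by
  have : Nonempty (Fin n) := ⟨⟨0, hn⟩⟩
  have hmp := (volume : Measure (EuclideanSpace ℝ (Fin n))).measurePreserving_homeomorphUnitSphereProd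
  have hfin : Module.finrank ℝ (EuclideanSpace ℝ (Fin n)) = n := by simp
  rw [hfin] at hmp
  rw [← lintegral_prod_mul (by fun_prop) (by fun_prop)]
  rw [← hmp.lintegral_comp (by fun_prop)]
  simp only [homeomorphUnitSphereProd_apply_fst_coe, homeomorphUnitSphereProd_apply_snd_coe]
  rw [lintegral_subtype_comap (measurableSet_singleton _).compl
    (fun x : EuclideanSpace ℝ (Fin n) => f ⟪η, ‖x‖⁻¹ • x⟫ * w ‖x‖), restrict_compl_singleton]
  congr 1
  ext x
  rw [inner_smul_right, div_eq_inv_mul]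

lemma rotate_aux {m : ℕ} (G : ℝ → ℝ → ENNReal) (hG : Measurable (fun p : ℝ × ℝ => G p.1 p.2))
    (η : EuclideanSpace ℝ (Fin (m + 1))) :
    ∫⁻ x : EuclideanSpace ℝ (Fin (m + 1)), G ⟪η, x⟫ ‖x‖ =
    ∫⁻ x : EuclideanSpace ℝ (Fin (m + 1)), G (‖η‖ * x 0) ‖x‖ := by
  set v : EuclideanSpace ℝ (Fin (m + 1)) := ‖η‖ • EuclideanSpace.single 0 (1 : ℝ) with hv
  have hnv : ‖η‖ = ‖v‖ := by simp [hv, norm_smul]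
  set R := Submodule.reflection (ℝ ∙ (η - v))ᗮ with hR
  have hRη : R η = v := Submodule.reflection_sub hnv
  have hmeas : Measurable (fun x : EuclideanSpace ℝ (Fin (m + 1)) => G (‖η‖ * x 0) ‖x‖) := by
    have h2 : Measurable (fun x : EuclideanSpace ℝ (Fin (m + 1)) => ((‖η‖ * x 0, ‖x‖) : ℝ × ℝ)) := by
      fun_prop
    exact hG.comp h2
  rw [← (LinearIsometryEquiv.measurePreserving R).lintegral_comp hmeas]
  congr 1
  ext x
  rw [R.norm_map, ← R.inner_map_map η x, hRη, hv, real_inner_smul_left,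
    EuclideanSpace.inner_single_left]
  simp

lemma split_aux {m : ℕ} (G : ℝ → ℝ → ENNReal) (hG : Measurable (fun p : ℝ × ℝ => G p.1 p.2)) :
    ∫⁻ x : EuclideanSpace ℝ (Fin (m + 1)), G (x 0) ‖x‖ =
    ∫⁻ y : EuclideanSpace ℝ (Fin m), ∫⁻ s : ℝ, G s (Real.sqrt (s ^ 2 + ‖y‖ ^ 2)) := by
  have e1 := PiLp.volume_preserving_toLp (Fin (m + 1))
  have e2 := (volume_preserving_piFinSuccAbove (fun _ : Fin (m + 1) => ℝ) 0).symm
  have e3 : MeasurePreserving (Prod.map (id : ℝ → ℝ) (@WithLp.ofLp 2 (Fin m → ℝ))) volume volume :=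
    (MeasurePreserving.id _).prod (PiLp.volume_preserving_ofLp (Fin m))
  have e := (e1.comp e2).comp e3
  have hmeas : Measurable (fun x : EuclideanSpace ℝ (Fin (m + 1)) => G (x 0) ‖x‖) := by
    have h2 : Measurable (fun x : EuclideanSpace ℝ (Fin (m + 1)) => ((x 0, ‖x‖) : ℝ × ℝ)) := by
      fun_prop
    exact hG.comp h2
  rw [← e.lintegral_comp hmeas, Measure.volume_eq_prod, lintegral_prod_symm]
  · congr 1
    ext y
    congr 1
    ext s
    simp [EuclideanSpace.norm_eq, Fin.sum_univ_succ, MeasurableEquiv.piFinSuccAbove,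
      Fin.insertNthEquiv]
    rw [Real.sq_sqrt (by positivity)]
  · exact (hmeas.comp e.measurable).aemeasurable

lemma lintegral_smul_aux {V : Type*} [NormedAddCommGroup V] [InnerProductSpace ℝ V]
    [MeasurableSpace V] [BorelSpace V] [FiniteDimensional ℝ V] (g : V → ENNReal) (hg : Measurable g)
    (c : ℝ) (hc : 0 < c) :
    ∫⁻ y, g (c • y) = ENNReal.ofReal ((c⁻¹) ^ Module.finrank ℝ V) * ∫⁻ y, g y := by
  have h := Measure.map_addHaar_smul (volume : Measure V) hc.ne'
  rw [← lintegral_map hg (measurable_const_smul c), h, lintegral_smul_measure, smul_eq_mul,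
    abs_of_pos (by positivity), inv_pow]

lemma scale_aux {m : ℕ} (hm : 0 < m) (f : ℝ → ENNReal) (hf : Measurable f) (w : ℝ → ENNReal)
    (hw : Measurable w) :
    ∫⁻ y : EuclideanSpace ℝ (Fin m), ∫⁻ s : ℝ,
      f (s / Real.sqrt (s ^ 2 + ‖y‖ ^ 2)) * w (Real.sqrt (s ^ 2 + ‖y‖ ^ 2)) =
    (∫⁻ y : EuclideanSpace ℝ (Fin m), ENNReal.ofReal ‖y‖ * w ‖y‖) *
      ∫⁻ s : ℝ, f (s / Real.sqrt (1 + s ^ 2)) *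
        ENNReal.ofReal (((Real.sqrt (1 + s ^ 2))⁻¹) ^ (m + 1)) := by
  have : Nonempty (Fin m) := ⟨⟨0, hm⟩⟩
  have h1 : ∀ᵐ y : EuclideanSpace ℝ (Fin m), ∫⁻ s : ℝ,
      f (s / Real.sqrt (s ^ 2 + ‖y‖ ^ 2)) * w (Real.sqrt (s ^ 2 + ‖y‖ ^ 2)) =
      ∫⁻ s : ℝ, f (s / Real.sqrt (1 + s ^ 2)) *
        (ENNReal.ofReal ‖y‖ * w (Real.sqrt (1 + s ^ 2) * ‖y‖)) := by
    have h0 : ∀ᵐ y : EuclideanSpace ℝ (Fin m), y ≠ 0 := by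
      simp [ae_iff]
    filter_upwards [h0] with y hy
    have hy' : 0 < ‖y‖ := norm_pos_iff.2 hy
    have h := lintegral_smul_aux (fun s : ℝ =>
      f (s / Real.sqrt (s ^ 2 + ‖y‖ ^ 2)) * w (Real.sqrt (s ^ 2 + ‖y‖ ^ 2))) (by fun_prop) ‖y‖ hy'
    have h' : ∫⁻ s : ℝ,
      f (s / Real.sqrt (s ^ 2 + ‖y‖ ^ 2)) * w (Real.sqrt (s ^ 2 + ‖y‖ ^ 2)) = ENNReal.ofReal ‖y‖ *
       ∫⁻ s : ℝ, f (s / Real.sqrt (1 + s ^ 2)) * w (Real.sqrt (1 + s ^ 2) * ‖y‖) := by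
      have hh : ∀ s : ℝ, Real.sqrt ((‖y‖ • s) ^ 2 + ‖y‖ ^ 2) = Real.sqrt (1 + s ^ 2) * ‖y‖ := by
        intro s
        rw [show (‖y‖ • s) ^ 2 + ‖y‖ ^ 2 = (1 + s ^ 2) * ‖y‖ ^ 2 by simp; ring,
          Real.sqrt_mul (by positivity), Real.sqrt_sq hy'.le]
      have hh2 : ∀ s : ℝ, (‖y‖ • s) / (Real.sqrt (1 + s ^ 2) * ‖y‖) = s / Real.sqrt (1 + s ^ 2) := by
        intro s
        have : 0 < Real.sqrt (1 + s ^ 2) := Real.sqrt_pos.2 (by positivity)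
        simp only [smul_eq_mul]
        field_simp
      simp only [hh, hh2] at h
      rw [h, ← mul_assoc, ← ENNReal.ofReal_mul hy'.le]
      simp [hy'.ne']
    rw [h', ← lintegral_const_mul _ (by fun_prop)]
    congr 1
    ext s
    ring
  rw [lintegral_congr_ae h1, lintegral_lintegral_swap (by fun_prop)]
  rw [← lintegral_const_mul _ (by fun_prop)]
  congr 1
  ext s
  rw [lintegral_const_mul _ (by fun_prop)]
  have hs : 0 < Real.sqrt (1 + s ^ 2) := Real.sqrt_pos.2 (by positivity)
  have h := lintegral_smul_aux (fun y : EuclideanSpace ℝ (Fin m) =>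
    ENNReal.ofReal ((Real.sqrt (1 + s ^ 2))⁻¹) * (ENNReal.ofReal ‖y‖ * w ‖y‖)) (by fun_prop) _ hs
  have h2 : ∀ y : EuclideanSpace ℝ (Fin m), ENNReal.ofReal ((Real.sqrt (1 + s ^ 2))⁻¹) *
      (ENNReal.ofReal ‖Real.sqrt (1 + s ^ 2) • y‖ * w ‖Real.sqrt (1 + s ^ 2) • y‖) =
      ENNReal.ofReal ‖y‖ * w (Real.sqrt (1 + s ^ 2) * ‖y‖) := by
    intro y
    rw [norm_smul, Real.norm_of_nonneg hs.le, ← mul_assoc,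
      ← ENNReal.ofReal_mul (by positivity), inv_mul_cancel_left₀ hs.ne']
  simp only [h2] at h
  rw [lintegral_const_mul _ (by fun_prop)] at h
  rw [h, finrank_euclideanSpace_fin, pow_succ _ m, ENNReal.ofReal_mul (by positivity)]
  ring

lemma sphere_formula {m : ℕ} (hm : 0 < m) (f : ℝ → ENNReal) (hf : Measurable f) (w : ℝ → ENNReal)
    (hw : Measurable w) (η : EuclideanSpace ℝ (Fin (m + 1))) :
    (∫⁻ θ : sphere (0 : EuclideanSpace ℝ (Fin (m + 1))) 1,
        f ⟪η, (θ : EuclideanSpace ℝ (Fin (m + 1)))⟫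
        ∂(volume : Measure (EuclideanSpace ℝ (Fin (m + 1)))).toSphere) *
      ∫⁻ s : Ioi (0 : ℝ), w s ∂(Measure.volumeIoiPow m) =
    (∫⁻ y : EuclideanSpace ℝ (Fin m), ENNReal.ofReal ‖y‖ * w ‖y‖) *
      ∫⁻ s : ℝ, f (‖η‖ * (s / Real.sqrt (1 + s ^ 2))) *
        ENNReal.ofReal (((Real.sqrt (1 + s ^ 2))⁻¹) ^ (m + 1)) := by
  have h1 := polar_aux f hf w hw (Nat.succ_pos m) η
  rw [Nat.succ_sub_one] at h1
  rw [← h1, rotate_aux (fun a b => f (a / b) * w b) (by fun_prop) η,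
    split_aux (fun a b => f (‖η‖ * a / b) * w b) (by fun_prop),
    ← scale_aux hm (fun x => f (‖η‖ * x)) (by fun_prop) w hw]
  simp only [mul_div_assoc]

lemma uniformSphere_formula {m : ℕ} (hm : 0 < m) (f : ℝ → ENNReal) (hf : Measurable f)
    (η : EuclideanSpace ℝ (Fin (m + 1))) :
    (∫⁻ θ, f ⟪η, (θ : EuclideanSpace ℝ (Fin (m + 1)))⟫ ∂(uniformSphere (m + 1))) *
      (∫⁻ s : ℝ, ENNReal.ofReal (((Real.sqrt (1 + s ^ 2))⁻¹) ^ (m + 1))) ≤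
      ∫⁻ s : ℝ, f (‖η‖ * (s / Real.sqrt (1 + s ^ 2))) *
        ENNReal.ofReal (((Real.sqrt (1 + s ^ 2))⁻¹) ^ (m + 1)) := by
  set w : ℝ → ENNReal := (Iio (1 : ℝ)).indicator 1 with hwdef
  have hw : Measurable w := measurable_one.indicator measurableSet_Iio
  have hF := sphere_formula hm f hf w hw η
  have h1 := sphere_formula hm (fun _ => 1) measurable_const w hw η
  simp only [lintegral_one, one_mul] at h1
  rw [uniformSphere, lintegral_smul_measure, smul_eq_mul]
  set b := (volume : Measure (EuclideanSpace ℝ (Fin (m + 1)))).toSphere Set.univ with hb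
  set W := ∫⁻ s : Ioi (0 : ℝ), w s ∂(Measure.volumeIoiPow m) with hW
  set J := ∫⁻ y : EuclideanSpace ℝ (Fin m), ENNReal.ofReal ‖y‖ * w ‖y‖
  set Y := ∫⁻ s : ℝ, ENNReal.ofReal (((Real.sqrt (1 + s ^ 2))⁻¹) ^ (m + 1)) with hY
  have hb0 : b ≠ 0 := by
    rw [hb, Measure.measure_univ_ne_zero]
    exact Measure.toSphere_ne_zero _
  have hbt : b ≠ ⊤ := measure_ne_top _ _
  have hWv : W = ENNReal.ofReal (1 / (m + 1)) := by
    have := Measure.volumeIoiPow_apply_Iio m ⟨1, by simp⟩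
    have h2 : (fun s : Ioi (0 : ℝ) => w s) = (Iio (⟨1, by simp⟩ : Ioi (0 : ℝ))).indicator 1 := by
      ext s
      simp only [hwdef, Set.indicator, mem_Iio, ← Subtype.coe_lt_coe]
      rfl
    rw [hW, h2, lintegral_indicator_one measurableSet_Iio, this]
    simp
  have hW0 : W ≠ 0 := by
    rw [hWv]; simp; positivity
  have hWt : W ≠ ⊤ := by rw [hWv]; simp
  have hJ0 : J ≠ 0 := by
    intro h; rw [h, zero_mul] at h1
    exact (mul_ne_zero hb0 hW0) h1
  have hY0 : Y ≠ 0 := by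
    intro h; rw [h, mul_zero] at h1
    exact (mul_ne_zero hb0 hW0) h1
  have hJt : J ≠ ⊤ := by
    intro h; rw [h, ENNReal.top_mul hY0] at h1
    exact (ENNReal.mul_ne_top hbt hWt) h1
  have hYt : Y ≠ ⊤ := by
    intro h; rw [h, ENNReal.mul_top hJ0] at h1
    exact (ENNReal.mul_ne_top hbt hWt) h1
  set A := ∫⁻ θ : sphere (0 : EuclideanSpace ℝ (Fin (m + 1))) 1,
        f ⟪η, (θ : EuclideanSpace ℝ (Fin (m + 1)))⟫
        ∂(volume : Measure (EuclideanSpace ℝ (Fin (m + 1)))).toSphere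
  set X := ∫⁻ s : ℝ, f (‖η‖ * (s / Real.sqrt (1 + s ^ 2))) *
        ENNReal.ofReal (((Real.sqrt (1 + s ^ 2))⁻¹) ^ (m + 1))
  -- A W = J X, b W = J Y
  apply le_of_eq
  have h3 : (J * (b * W)) * (b⁻¹ * A * Y) = (J * (b * W)) * X := by
    calc (J * (b * W)) * (b⁻¹ * A * Y) = (b * b⁻¹) * ((A * W) * (J * Y)) := by ring
      _ = (J * (b * W)) * X := by rw [ENNReal.mul_inv_cancel hb0 hbt, hF, ← h1]; ring
  exact (ENNReal.mul_right_inj (mul_ne_zero hJ0 (mul_ne_zero hb0 hW0))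
    (ENNReal.mul_ne_top hJt (ENNReal.mul_ne_top hbt hWt))).1 h3

lemma inv_sqrt_lower (s : ℝ) : Real.exp (-s ^ 2 / 2) ≤ (Real.sqrt (1 + s ^ 2))⁻¹ := by
  have h : Real.sqrt (1 + s ^ 2) ≤ Real.exp (s ^ 2 / 2) := by
    apply Real.sqrt_le_iff.2 ⟨by positivity, ?_⟩
    rw [← Real.exp_nat_mul]
    have := Real.add_one_le_exp (s ^ 2)
    convert (add_comm _ _).trans_le this using 2
    push_cast; ring
  rw [neg_div, Real.exp_neg]
  exact inv_anti₀ (Real.sqrt_pos.2 (by positivity)) h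

lemma inv_sqrt_upper (s : ℝ) :
    (Real.sqrt (1 + s ^ 2))⁻¹ ≤ Real.exp (-(s / Real.sqrt (1 + s ^ 2)) ^ 2 / 2) := by
  have hs : 0 < 1 + s ^ 2 := by positivity
  have h := Real.add_one_le_exp (-(s / Real.sqrt (1 + s ^ 2)) ^ 2)
  apply (pow_le_pow_iff_left₀ (by positivity) (by positivity) two_ne_zero).1
  rw [← Real.exp_nat_mul, inv_pow, Real.sq_sqrt hs.le]
  rw [div_pow, Real.sq_sqrt hs.le] at *
  have e : -(s ^ 2 / (1 + s ^ 2)) + 1 = (1 + s ^ 2)⁻¹ := by field_simp; ring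
  rw [e] at h
  refine h.trans (le_of_eq ?_)
  congr 1
  push_cast; ring

lemma Y_lower (n : ℕ) (hn : 0 < n) : ENNReal.ofReal (Real.sqrt (2 * Real.pi / n)) ≤
    ∫⁻ s : ℝ, ENNReal.ofReal (((Real.sqrt (1 + s ^ 2))⁻¹) ^ n) := by
  have hn' : (0 : ℝ) < n := by exact_mod_cast hn
  have h := integral_gaussian (n / 2 : ℝ)
  rw [show 2 * Real.pi / n = Real.pi / (n / 2) by field_simp, ← h,
    ofReal_integral_eq_lintegral_ofReal (integrable_exp_neg_mul_sq (by positivity))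
      (Filter.Eventually.of_forall fun x => (Real.exp_pos _).le)]
  apply lintegral_mono
  intro s
  apply ENNReal.ofReal_le_ofReal
  calc Real.exp (-(n / 2) * s ^ 2) = Real.exp (-s ^ 2 / 2) ^ n := by
        rw [← Real.exp_nat_mul]; ring_nf
    _ ≤ _ := by gcongr; exact inv_sqrt_lower s

lemma hasDerivAt_psi (s : ℝ) : HasDerivAt (fun s : ℝ => s / Real.sqrt (1 + s ^ 2))
    (((Real.sqrt (1 + s ^ 2))⁻¹) ^ 3) s := by
  have hs : 0 < 1 + s ^ 2 := by positivity
  have hq : 0 < Real.sqrt (1 + s ^ 2) := Real.sqrt_pos.2 hs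
  have h1 : HasDerivAt (fun s : ℝ => 1 + s ^ 2) (2 * s) s := by
    simpa using (hasDerivAt_pow 2 s).const_add 1
  have h2 := (hasDerivAt_id s).div (h1.sqrt hs.ne') hq.ne'
  refine HasDerivAt.congr_deriv (f := fun s : ℝ => s / Real.sqrt (1 + s ^ 2)) h2 ?_
  have := Real.sq_sqrt hs.le
  simp only [id]
  field_simp
  rw [this]; ring

lemma X_upper (f : ℝ → ENNReal) (k : ℕ) :
    ∫⁻ s : ℝ, f (s / Real.sqrt (1 + s ^ 2)) *
        ENNReal.ofReal (((Real.sqrt (1 + s ^ 2))⁻¹) ^ (k + 3)) ≤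
    ∫⁻ x : ℝ, f x * ENNReal.ofReal (Real.exp (-(k : ℝ) * x ^ 2 / 2)) := by
  have hmono : StrictMono (fun s : ℝ => s / Real.sqrt (1 + s ^ 2)) := by
    apply strictMono_of_hasDerivAt_pos (f' := fun s => ((Real.sqrt (1 + s ^ 2))⁻¹) ^ 3)
    · exact hasDerivAt_psi
    · intro s
      have hs : 0 < Real.sqrt (1 + s ^ 2) := Real.sqrt_pos.2 (by positivity)
      positivity
  have h := lintegral_image_eq_lintegral_abs_deriv_mul MeasurableSet.univ
    (fun s _ => (hasDerivAt_psi s).hasDerivWithinAt) hmono.injective.injOn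
    (fun x => f x * ENNReal.ofReal (Real.exp (-(k : ℝ) * x ^ 2 / 2)))
  rw [Measure.restrict_univ] at h
  refine le_trans ?_ (h.symm.le.trans (lintegral_mono' Measure.restrict_le_self le_rfl))
  apply lintegral_mono
  intro s
  have hs : 0 < Real.sqrt (1 + s ^ 2) := Real.sqrt_pos.2 (by positivity)
  beta_reduce
  rw [abs_of_pos (by positivity), mul_left_comm, ← ENNReal.ofReal_mul (by positivity)]
  gcongr
  rw [pow_add, mul_comm]
  gcongr
  calc _ ≤ Real.exp (-(s / Real.sqrt (1 + s ^ 2)) ^ 2 / 2) ^ k := by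
        gcongr; exact inv_sqrt_upper s
    _ = _ := by rw [← Real.exp_nat_mul]; ring_nf

lemma gauss_calc (a t : ℝ) (k : ℝ) (hk : 0 < k) :
    ∫⁻ x : ℝ, ENNReal.ofReal (gphi (a * x + t)) * ENNReal.ofReal (Real.exp (-k * x ^ 2 / 2)) =
    ENNReal.ofReal (Real.sqrt (2 * Real.pi / (a ^ 2 + k)) *
      Real.exp (-(t ^ 2 * k / (2 * (a ^ 2 + k))))) := by
  have hb : 0 < a ^ 2 + k := by positivity
  have h := integral_gaussian ((a ^ 2 + k) / 2)
  rw [show 2 * Real.pi / (a ^ 2 + k) = Real.pi / ((a ^ 2 + k) / 2) by field_simp, ← h, mul_comm,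
    ENNReal.ofReal_mul (by positivity),
    ofReal_integral_eq_lintegral_ofReal (integrable_exp_neg_mul_sq (by positivity))
      (Filter.Eventually.of_forall fun x => (Real.exp_pos _).le),
    ← lintegral_add_left_eq_self _ (-(a * t / (a ^ 2 + k))), ← lintegral_const_mul _ (by fun_prop)]
  congr 1
  ext x
  unfold gphi
  rw [← ENNReal.ofReal_mul (by positivity), ← ENNReal.ofReal_mul (by positivity),
    ← Real.exp_add, ← Real.exp_add]
  congr 2
  field_simp
  ring

lemma uniformSphere_prob {n : ℕ} (hn : 0 < n) : IsProbabilityMeasure (uniformSphere n) := by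
  have : Nonempty (Fin n) := ⟨⟨0, hn⟩⟩
  constructor
  rw [uniformSphere, Measure.smul_apply, smul_eq_mul]
  apply ENNReal.inv_mul_cancel
  · rw [Measure.measure_univ_ne_zero]
    exact Measure.toSphere_ne_zero _
  · exact measure_ne_top _ _

lemma gphi_cont : Continuous gphi := by unfold gphi; fun_prop

lemma gphi_nonneg (x : ℝ) : 0 ≤ gphi x := (Real.exp_pos _).le

lemma expect_bound {n : ℕ} (hn : 4 ≤ n) (η : EuclideanSpace ℝ (Fin n)) (r t : ℝ) :
    ∫ θ, gphi (r * ⟪η, (θ : EuclideanSpace ℝ (Fin n))⟫ + t) ∂(uniformSphere n) ≤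
    Real.sqrt (n / ((r * ‖η‖) ^ 2 + (n - 3))) *
      Real.exp (-(t ^ 2 * (n - 3) / (2 * ((r * ‖η‖) ^ 2 + (n - 3))))) := by
  obtain ⟨k, rfl⟩ : ∃ k, n = k + 3 := ⟨n - 3, by omega⟩
  have hk : (0 : ℝ) < k := by exact_mod_cast (by omega : 0 < k)
  have hf : Measurable (fun x : ℝ => ENNReal.ofReal (gphi (r * x + t))) := by
    have := gphi_cont.measurable
    fun_prop
  have h1 := uniformSphere_formula (m := k + 2) (by omega) _ hf η
  have h2 := X_upper (fun x => ENNReal.ofReal (gphi (r * (‖η‖ * x) + t))) k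
  have h3 := gauss_calc (r * ‖η‖) t k hk
  simp only [mul_assoc r] at h3
  have h4 := Y_lower (k + 3) (by omega)
  have h5 := (mul_le_mul_right h4 _).trans (h1.trans (h2.trans h3.le))
  have hn3 : ((k + 3 : ℕ) : ℝ) - 3 = k := by push_cast; ring
  rw [hn3, integral_eq_lintegral_of_nonneg_ae (Filter.Eventually.of_forall fun x => gphi_nonneg _)]
  · apply ENNReal.toReal_le_of_le_ofReal (by positivity)
    have hpos : 0 < Real.sqrt (2 * Real.pi / (k + 3 : ℕ)) := Real.sqrt_pos.2 (by positivity)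
    rw [← ENNReal.mul_le_mul_iff_left (c := ENNReal.ofReal (Real.sqrt (2 * Real.pi / (k + 3 : ℕ))))
      (by simpa using hpos) (by simp), ← ENNReal.ofReal_mul (by positivity)]
    refine h5.trans (le_of_eq ?_)
    congr 1
    rw [mul_right_comm, ← Real.sqrt_mul (by positivity)]
    congr 2
    field_simp
  · have : Continuous (fun θ : sphere (0 : EuclideanSpace ℝ (Fin (k + 3))) 1 =>
      gphi (r * ⟪η, (θ : EuclideanSpace ℝ (Fin (k + 3)))⟫ + t)) := gphi_cont.comp (by fun_prop)
    exact this.aestronglyMeasurable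

lemma abs_mul_gphi_le (x : ℝ) : |x| * gphi x ≤ 1 := by
  unfold gphi
  have h := Real.add_one_le_exp (x ^ 2 / 2)
  have h2 : |x| ≤ Real.exp (x ^ 2 / 2) := by
    nlinarith [sq_nonneg (|x| - 1), sq_abs x]
  rw [neg_div, Real.exp_neg, ← div_eq_mul_inv, div_le_one (Real.exp_pos _)]
  exact h2

lemma gphi_le_one (x : ℝ) : gphi x ≤ 1 := by
  unfold gphi
  rw [Real.exp_le_one_iff]
  nlinarith [sq_nonneg x]

lemma gphi_lip (x y : ℝ) : gphi x ≤ gphi y + |x - y| := by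
  have hd : ∀ z : ℝ, HasDerivAt gphi (-z * gphi z) z := by
    intro z
    have h1 : HasDerivAt (fun z : ℝ => -z ^ 2 / 2) (-z) z := by
      have := ((hasDerivAt_pow 2 z).neg).div_const 2
      refine HasDerivAt.congr_deriv (f := fun z : ℝ => -z ^ 2 / 2) this ?_
      simp; ring
    refine HasDerivAt.congr_deriv (f := gphi) h1.exp ?_
    unfold gphi; ring
  have h := Convex.norm_image_sub_le_of_norm_hasDerivWithin_le (f := gphi) (C := 1) (s := Set.univ)
    (x := y) (y := x) (fun z _ => (hd z).hasDerivWithinAt) (fun z _ => by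
      rw [Real.norm_eq_abs, abs_mul, abs_neg, abs_of_nonneg (gphi_nonneg z)]
      exact abs_mul_gphi_le z) convex_univ (mem_univ _) (mem_univ _)
  rw [Real.norm_eq_abs, Real.norm_eq_abs, one_mul] at h
  have := le_abs_self (gphi x - gphi y)
  linarith

lemma Ffun_lip {n N : ℕ} (hN : 0 < N) (r t t' : ℝ)
    (θ : Fin N → sphere (0 : EuclideanSpace ℝ (Fin n)) 1) (η : EuclideanSpace ℝ (Fin n)) :
    Ffun r t θ η ≤ Ffun r t' θ η + |t - t'| := by
  unfold Ffun
  have hN' : (0 : ℝ) < N := by exact_mod_cast hN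
  have h : ∑ k : Fin N, gphi (r * ⟪η, (θ k : EuclideanSpace ℝ (Fin n))⟫ + t) ≤
      ∑ k : Fin N, (gphi (r * ⟪η, (θ k : EuclideanSpace ℝ (Fin n))⟫ + t') + |t - t'|) := by
    apply Finset.sum_le_sum
    intro k _
    refine (gphi_lip _ (r * ⟪η, (θ k : EuclideanSpace ℝ (Fin n))⟫ + t')).trans (le_of_eq ?_)
    congr 2
    ring
  rw [Finset.sum_add_distrib, Finset.sum_const, Finset.card_univ, Fintype.card_fin, nsmul_eq_mul] at h
  calc _ ≤ 1 / (N : ℝ) * (∑ k : Fin N, gphi (r * ⟪η, (θ k : EuclideanSpace ℝ (Fin n))⟫ + t') +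
        N * |t - t'|) := by gcongr
    _ = _ := by field_simp

lemma gphi_comp_cont {n : ℕ} (η : EuclideanSpace ℝ (Fin n)) (r t : ℝ) :
    Continuous (fun θ : sphere (0 : EuclideanSpace ℝ (Fin n)) 1 =>
      gphi (r * ⟪η, (θ : EuclideanSpace ℝ (Fin n))⟫ + t)) := gphi_cont.comp (by fun_prop)

lemma gphi_comp_int {n : ℕ} (hn : 0 < n) (η : EuclideanSpace ℝ (Fin n)) (r t : ℝ) :
    Integrable (fun θ : sphere (0 : EuclideanSpace ℝ (Fin n)) 1 =>
      gphi (r * ⟪η, (θ : EuclideanSpace ℝ (Fin n))⟫ + t)) (uniformSphere n) := by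
  have := uniformSphere_prob hn
  apply Integrable.of_bound (gphi_comp_cont η r t).aestronglyMeasurable 1
  refine Filter.Eventually.of_forall fun x => ?_
  rw [Real.norm_of_nonneg (gphi_nonneg _)]
  exact gphi_le_one _

lemma expect_lip {n : ℕ} (hn : 0 < n) (r t t' : ℝ) (η : EuclideanSpace ℝ (Fin n)) :
    ∫ θ, gphi (r * ⟪η, (θ : EuclideanSpace ℝ (Fin n))⟫ + t) ∂(uniformSphere n) ≤
    ∫ θ, gphi (r * ⟪η, (θ : EuclideanSpace ℝ (Fin n))⟫ + t') ∂(uniformSphere n) + |t - t'| := by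
  have := uniformSphere_prob hn
  have h : ∫ θ, gphi (r * ⟪η, (θ : EuclideanSpace ℝ (Fin n))⟫ + t) ∂(uniformSphere n) ≤
    ∫ θ, (gphi (r * ⟪η, (θ : EuclideanSpace ℝ (Fin n))⟫ + t') + |t - t'|) ∂(uniformSphere n) := by
    apply integral_mono (gphi_comp_int hn η r t) ((gphi_comp_int hn η r t').add (integrable_const _))
    intro θ
    refine (gphi_lip _ (r * ⟪η, (θ : EuclideanSpace ℝ (Fin n))⟫ + t')).trans (le_of_eq ?_)
    congr 2
    ring
  rw [integral_add (gphi_comp_int hn η r t') (integrable_const _)] at h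
  simpa using h

lemma hoeff {n N : ℕ} (hn : 0 < n) (hN : 0 < N) (r t u : ℝ) (hu : 0 ≤ u)
    (η : EuclideanSpace ℝ (Fin n)) :
    (sphereProduct n N).real {θ |
      ∫ x, gphi (r * ⟪η, (x : EuclideanSpace ℝ (Fin n))⟫ + t) ∂(uniformSphere n) + u ≤ Ffun r t θ η} ≤
      Real.exp (-(2 * N * u ^ 2)) := by
  have := uniformSphere_prob hn
  have hN' : (0 : ℝ) < N := by exact_mod_cast hN
  have hP : IsProbabilityMeasure (sphereProduct n N) := by
    unfold sphereProduct; infer_instance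
  set g : sphere (0 : EuclideanSpace ℝ (Fin n)) 1 → ℝ := fun x =>
    gphi (r * ⟪η, (x : EuclideanSpace ℝ (Fin n))⟫ + t) with hg
  have hgc : Continuous g := gphi_comp_cont η r t
  set E := ∫ x, g x ∂(uniformSphere n) with hE
  have hind : ProbabilityTheory.iIndepFun (fun (i : Fin N)
      (ω : Fin N → sphere (0 : EuclideanSpace ℝ (Fin n)) 1) => g (ω i) - E) (sphereProduct n N) :=
    ProbabilityTheory.iIndepFun_pi (X := fun _ x => g x - E)
      (fun i => (hgc.sub continuous_const).measurable.aemeasurable)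
  have hsub : ∀ i ∈ (Finset.univ : Finset (Fin N)), ProbabilityTheory.HasSubgaussianMGF
      (fun (ω : Fin N → sphere (0 : EuclideanSpace ℝ (Fin n)) 1) => g (ω i) - E)
      ((‖(1 : ℝ) - 0‖₊ / 2) ^ 2) (sphereProduct n N) := by
    intro i _
    have h := ProbabilityTheory.hasSubgaussianMGF_of_mem_Icc (μ := sphereProduct n N)
      (X := fun ω => g (ω i)) (a := 0) (b := 1)
      ((hgc.measurable.comp (measurable_pi_apply i)).aemeasurable)
      (Filter.Eventually.of_forall fun ω => ⟨gphi_nonneg _, gphi_le_one _⟩)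
    have hEi : ∫ ω, g (ω i) ∂(sphereProduct n N) = E := by
      unfold sphereProduct
      exact integral_comp_eval (μ := fun _ : Fin N => uniformSphere n)
        hgc.aestronglyMeasurable
    rw [hEi] at h
    exact h
  have h := ProbabilityTheory.HasSubgaussianMGF.measure_sum_ge_le_of_iIndepFun hind hsub
    (ε := N * u) (by positivity)
  refine le_trans (le_of_eq ?_) (h.trans (le_of_eq ?_))
  · congr 1
    ext θ
    simp only [mem_ofPred_eq, Finset.sum_sub_distrib, Finset.sum_const, Finset.card_univ,
      Fintype.card_fin, nsmul_eq_mul, Ffun]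
    rw [one_div, inv_mul_eq_div, le_div_iff₀ hN', le_sub_iff_add_le]
    constructor <;> intro h <;> linarith
  · congr 1
    simp
    field_simp

lemma geom_count (ρ : ℝ) (h0 : 0 < ρ) (h1 : ρ < 1 / 3) (K : ℕ) :
    ∑ k ∈ Finset.Icc (-(K : ℤ)) K, Real.exp (-(ρ * |(k : ℝ)|)) ≤ Real.exp 1 / ρ := by
  have hx0 : 0 ≤ Real.exp (-ρ) := (Real.exp_pos _).le
  have hx1 : Real.exp (-ρ) < 1 := by rw [Real.exp_lt_one_iff]; linarith
  have hsub : Finset.Icc (-(K : ℤ)) K ⊆ (Finset.range (K + 1)).image (fun j : ℕ => (j : ℤ)) ∪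
      (Finset.range (K + 1)).image (fun j : ℕ => -(j : ℤ)) := by
    intro k hk
    rw [Finset.mem_Icc] at hk
    rw [Finset.mem_union, Finset.mem_image, Finset.mem_image]
    rcases le_total 0 k with h | h
    · left; exact ⟨k.toNat, by rw [Finset.mem_range]; omega, by omega⟩
    · right; exact ⟨(-k).toNat, by rw [Finset.mem_range]; omega, by omega⟩
  have hg : ∑ j ∈ Finset.range (K + 1), Real.exp (-ρ) ^ j ≤ (1 - Real.exp (-ρ))⁻¹ := by
    have := Summable.sum_le_tsum (Finset.range (K + 1)) (fun i _ => pow_nonneg hx0 i)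
      (summable_geometric_of_lt_one hx0 hx1)
    rwa [tsum_geometric_of_lt_one hx0 hx1] at this
  have hpow : ∀ j : ℕ, Real.exp (-(ρ * (j : ℝ))) = Real.exp (-ρ) ^ j := by
    intro j; rw [← Real.exp_nat_mul]; ring_nf
  have hA : ∑ k ∈ (Finset.range (K + 1)).image (fun j : ℕ => (j : ℤ)),
      Real.exp (-(ρ * |(k : ℝ)|)) = ∑ j ∈ Finset.range (K + 1), Real.exp (-ρ) ^ j := by
    rw [Finset.sum_image (fun a _ b _ h => by simpa using h)]
    simp [hpow]
  have hB : ∑ k ∈ (Finset.range (K + 1)).image (fun j : ℕ => -(j : ℤ)),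
      Real.exp (-(ρ * |(k : ℝ)|)) = ∑ j ∈ Finset.range (K + 1), Real.exp (-ρ) ^ j := by
    rw [Finset.sum_image (fun a _ b _ h => by simpa using h)]
    simp [hpow]
  have hU : ∑ k ∈ (Finset.range (K + 1)).image (fun j : ℕ => (j : ℤ)) ∪
      (Finset.range (K + 1)).image (fun j : ℕ => -(j : ℤ)), Real.exp (-(ρ * |(k : ℝ)|)) ≤
      2 * ∑ j ∈ Finset.range (K + 1), Real.exp (-ρ) ^ j := by
    have := Finset.sum_union_inter (s₁ := (Finset.range (K + 1)).image (fun j : ℕ => (j : ℤ)))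
      (s₂ := (Finset.range (K + 1)).image (fun j : ℕ => -(j : ℤ)))
      (f := fun k : ℤ => Real.exp (-(ρ * |(k : ℝ)|)))
    rw [hA, hB] at this
    have h2 : 0 ≤ ∑ k ∈ (Finset.range (K + 1)).image (fun j : ℕ => (j : ℤ)) ∩
      (Finset.range (K + 1)).image (fun j : ℕ => -(j : ℤ)), Real.exp (-(ρ * |(k : ℝ)|)) :=
      Finset.sum_nonneg fun _ _ => (Real.exp_pos _).le
    linarith
  have hS := Finset.sum_le_sum_of_subset_of_nonneg (f := fun k : ℤ => Real.exp (-(ρ * |(k : ℝ)|)))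
    hsub (fun _ _ _ => (Real.exp_pos _).le)
  have hlow : 3 / 4 * ρ ≤ 1 - Real.exp (-ρ) := by
    have h := Real.add_one_le_exp ρ
    have h3 : Real.exp (-ρ) ≤ (1 + ρ)⁻¹ := by
      rw [Real.exp_neg]; exact inv_anti₀ (by linarith) (by linarith)
    have h4 : (1 + ρ)⁻¹ ≤ 1 - 3 / 4 * ρ := by
      rw [inv_le_iff_one_le_mul₀ (by linarith)]
      nlinarith
    linarith
  have hinv : (1 - Real.exp (-ρ))⁻¹ ≤ (3 / 4 * ρ)⁻¹ := inv_anti₀ (by positivity) hlow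
  have he := Real.exp_one_gt_d9
  have hfin : 2 * (3 / 4 * ρ)⁻¹ ≤ Real.exp 1 / ρ := by
    rw [mul_inv, ← mul_assoc, div_eq_mul_inv]
    apply mul_le_mul_of_nonneg_right _ (by positivity)
    norm_num
    linarith
  linarith

lemma net_count (n : ℕ) (hn : 0 < n) (ρ : ℝ) (h0 : 0 < ρ) (h1 : ρ < 1 / 3) :
    ∃ S : Finset (EuclideanSpace ℝ (Fin n)), Fnet n ρ ⊆ S ∧
      (S.card : ℝ) ≤ Real.exp (3 * n + n * Real.log (1 / ρ)) := by
  classical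
  have hn' : (0 : ℝ) < n := by exact_mod_cast hn
  have hsn : 0 < Real.sqrt n := Real.sqrt_pos.2 hn'
  set B : ℝ := 4 / 3 * n / ρ with hB
  have hB0 : 0 < B := by positivity
  set K : ℕ := ⌈B⌉₊ with hK
  set P : Finset (Fin n → ℤ) := Fintype.piFinset (fun _ => Finset.Icc (-(K : ℤ)) K) with hP
  set M : Finset (Fin n → ℤ) := P.filter (fun m => ∑ i, |(m i : ℝ)| ≤ B) with hM
  refine ⟨M.image (fun m => WithLp.toLp 2 (fun i => ρ / Real.sqrt n * (m i : ℝ))), ?_, ?_⟩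
  · rintro η ⟨⟨hη, -⟩, hl⟩
    choose m hm using hl
    rw [mem_closedBall_zero_iff] at hη
    have hCS := sq_sum_le_card_mul_sum_sq (s := (Finset.univ : Finset (Fin n))) (f := fun i => |η i|)
    simp only [Finset.card_univ, Fintype.card_fin, sq_abs] at hCS
    have hnorm : ‖η‖ ^ 2 = ∑ i, η i ^ 2 := by
      rw [EuclideanSpace.real_norm_sq_eq]
    rw [← hnorm] at hCS
    have hCS2 : ∑ i, |η i| ≤ Real.sqrt n * ‖η‖ := by
      apply abs_le_of_sq_le_sq' _ (by positivity) |>.2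
      rw [mul_pow, Real.sq_sqrt hn'.le]
      exact hCS
    have hsum : ∑ i, |η i| = ρ / Real.sqrt n * ∑ i, |(m i : ℝ)| := by
      rw [Finset.mul_sum]
      apply Finset.sum_congr rfl
      intro i _
      rw [hm i, abs_mul, abs_of_pos (by positivity)]
    have hL : ∑ i, |(m i : ℝ)| ≤ B := by
      rw [hsum] at hCS2
      have h3 : ρ / Real.sqrt n * ∑ i, |(m i : ℝ)| ≤ Real.sqrt n * (4 / 3) :=
        hCS2.trans (by gcongr; linarith)
      rw [div_mul_eq_mul_div, div_le_iff₀ hsn] at h3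
      rw [hB, le_div_iff₀ h0]
      have := Real.mul_self_sqrt hn'.le
      nlinarith
    rw [Finset.mem_coe, Finset.mem_image]
    refine ⟨m, ?_, ?_⟩
    · rw [hM, Finset.mem_filter, hP, Fintype.mem_piFinset]
      refine ⟨fun i => ?_, hL⟩
      have h4 : |(m i : ℝ)| ≤ K := by
        refine (Finset.single_le_sum (f := fun i => |(m i : ℝ)|) (fun _ _ => abs_nonneg _)
          (Finset.mem_univ i)).trans (hL.trans (Nat.le_ceil B))
      have h5 : |m i| ≤ (K : ℤ) := by exact_mod_cast h4
      rw [Finset.mem_Icc]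
      exact abs_le.1 h5
    · ext i
      exact (hm i).symm
  · have hc1 : ((M.image (fun m => (WithLp.toLp 2 (fun i => ρ / Real.sqrt n * (m i : ℝ)) :
        EuclideanSpace ℝ (Fin n)))).card : ℝ) ≤ M.card := by
      exact_mod_cast Finset.card_image_le
    refine hc1.trans ?_
    have hc2 : (M.card : ℝ) ≤ ∑ m ∈ M, Real.exp (4 / 3 * n) * ∏ i, Real.exp (-(ρ * |(m i : ℝ)|)) := by
      rw [Finset.card_eq_sum_ones]
      push_cast
      apply Finset.sum_le_sum
      intro m hm
      rw [hM, Finset.mem_filter] at hm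
      rw [← Real.exp_sum, ← Real.exp_add]
      apply Real.one_le_exp
      rw [Finset.sum_neg_distrib, ← Finset.mul_sum]
      have := hm.2
      rw [hB, le_div_iff₀ h0] at this
      linarith
    have hc3 : ∑ m ∈ M, Real.exp (4 / 3 * n) * ∏ i, Real.exp (-(ρ * |(m i : ℝ)|)) ≤
        ∑ m ∈ P, Real.exp (4 / 3 * n) * ∏ i, Real.exp (-(ρ * |(m i : ℝ)|)) :=
      Finset.sum_le_sum_of_subset_of_nonneg (Finset.filter_subset _ _)
        (fun _ _ _ => by positivity)
    rw [← Finset.mul_sum (s := P), hP, ← Finset.prod_univ_sum (fun _ : Fin n => Finset.Icc (-(K : ℤ)) K)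
      (fun _ k => Real.exp (-(ρ * |(k : ℝ)|)))] at hc3
    refine hc2.trans (hc3.trans ?_)
    rw [Finset.prod_const, Finset.card_univ, Fintype.card_fin]
    have hρ : Real.exp 1 / ρ = Real.exp (1 + Real.log (1 / ρ)) := by
      rw [Real.exp_add, Real.exp_log (by positivity)]; ring
    have hs0 : 0 ≤ ∑ k ∈ Finset.Icc (-(K : ℤ)) K, Real.exp (-(ρ * |(k : ℝ)|)) :=
      Finset.sum_nonneg fun _ _ => (Real.exp_pos _).le
    calc _ ≤ Real.exp (4 / 3 * n) * (Real.exp (1 + Real.log (1 / ρ))) ^ n := by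
          gcongr
          exact (geom_count ρ h0 h1 K).trans hρ.le
      _ = Real.exp (4 / 3 * n + n * (1 + Real.log (1 / ρ))) := by
          rw [← Real.exp_nat_mul, ← Real.exp_add]
      _ ≤ _ := by
          apply Real.exp_le_exp.2
          nlinarith

lemma Ffun_large {n N : ℕ} (hn : 100 ≤ n) (hN : 0 < N) (r t : ℝ) (hr0 : 0 ≤ r) (hr : r ≤ n)
    (θ : Fin N → sphere (0 : EuclideanSpace ℝ (Fin n)) 1) (η : EuclideanSpace ℝ (Fin n))
    (hη : ‖η‖ ≤ 2) (ht : (n : ℝ) ^ 6 ≤ |t|) : Ffun r t θ η ≤ 1 / (n : ℝ) ^ 5 := by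
  have hn' : (100 : ℝ) ≤ n := by exact_mod_cast hn
  have hN' : (0 : ℝ) < N := by exact_mod_cast hN
  unfold Ffun
  have h : ∑ k : Fin N, gphi (r * ⟪η, (θ k : EuclideanSpace ℝ (Fin n))⟫ + t) ≤
      ∑ k : Fin N, 1 / (n : ℝ) ^ 5 := by
    apply Finset.sum_le_sum
    intro k _
    have hin : |⟪η, (θ k : EuclideanSpace ℝ (Fin n))⟫| ≤ 2 := by
      have h1 := abs_real_inner_le_norm η (θ k : EuclideanSpace ℝ (Fin n))
      have h2 : ‖(θ k : EuclideanSpace ℝ (Fin n))‖ = 1 := by simp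
      rw [h2, mul_one] at h1
      linarith
    set x := ⟪η, (θ k : EuclideanSpace ℝ (Fin n))⟫
    have hrx : |r * x| ≤ 2 * n := by
      rw [abs_mul, abs_of_nonneg hr0]
      nlinarith [abs_nonneg x]
    have htri : |t| ≤ |r * x + t| + |r * x| := by
      have := abs_sub (r * x + t) (r * x)
      rwa [add_sub_cancel_left] at this
    have hn5 : (n : ℝ) ≤ (n : ℝ) ^ 5 := le_self_pow₀ (by linarith) (by norm_num)
    have hbig : (n : ℝ) ^ 5 ≤ |r * x + t| := by
      have : (n : ℝ) ^ 6 = n * (n : ℝ) ^ 5 := by ring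
      nlinarith
    have hpos : 0 < (n : ℝ) ^ 5 := by positivity
    rw [le_div_iff₀ hpos]
    have := abs_mul_gphi_le (r * x + t)
    nlinarith [gphi_nonneg (r * x + t)]
  rw [Finset.sum_const, Finset.card_univ, Fintype.card_fin, nsmul_eq_mul] at h
  calc _ ≤ 1 / (N : ℝ) * (N * (1 / (n : ℝ) ^ 5)) := by gcongr
    _ = _ := by field_simp

lemma expect_final {n : ℕ} (hn : 100 ≤ n) (ρ r t : ℝ) (h0 : 0 < ρ) (h1 : ρ < 1 / 3) (hr0 : 0 < r)
    (η : EuclideanSpace ℝ (Fin n)) (hη1 : ‖η‖ ≤ 1 + ρ) (hη2 : 1 - 2 * ρ < ‖η‖) :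
    ∫ θ, gphi (r * ⟪η, (θ : EuclideanSpace ℝ (Fin n))⟫ + t) ∂(uniformSphere n) ≤
    (1 + 6 * ρ) * (Real.sqrt n / r) *
      gphi (Real.sqrt ((n - 3) * r ^ 2 / (n * ((r * (1 + ρ)) ^ 2 + (n - 3)))) *
        Real.sqrt n * t / r) := by
  have hn' : (100 : ℝ) ≤ n := by exact_mod_cast hn
  have hnp : (0 : ℝ) < n := by linarith
  have hk : (0 : ℝ) < n - 3 := by linarith
  have hη0 : 0 < ‖η‖ := by linarith
  refine (expect_bound (by omega) η r t).trans ?_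
  set k : ℝ := (n : ℝ) - 3
  have hA : Real.sqrt (n / ((r * ‖η‖) ^ 2 + k)) ≤ (1 + 6 * ρ) * (Real.sqrt n / r) := by
    calc Real.sqrt (n / ((r * ‖η‖) ^ 2 + k)) ≤ Real.sqrt (n / ((r * ‖η‖) ^ 2)) := by
          apply Real.sqrt_le_sqrt
          apply div_le_div_of_nonneg_left hnp.le (by positivity)
          linarith
      _ = ‖η‖⁻¹ * (Real.sqrt n / r) := by
          rw [Real.sqrt_div hnp.le, Real.sqrt_sq (by positivity)]
          field_simp
      _ ≤ _ := by
          gcongr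
          rw [inv_le_iff_one_le_mul₀ hη0]
          nlinarith
  have hB : Real.exp (-(t ^ 2 * k / (2 * ((r * ‖η‖) ^ 2 + k)))) ≤
      gphi (Real.sqrt (k * r ^ 2 / (n * ((r * (1 + ρ)) ^ 2 + k))) * Real.sqrt n * t / r) := by
    unfold gphi
    apply Real.exp_le_exp.2
    rw [neg_div, neg_le_neg_iff, div_pow, mul_pow, mul_pow, Real.sq_sqrt (by positivity),
      Real.sq_sqrt hnp.le]
    have e : k * r ^ 2 / (n * ((r * (1 + ρ)) ^ 2 + k)) * n * t ^ 2 / r ^ 2 / 2 =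
      t ^ 2 * k / (2 * ((r * (1 + ρ)) ^ 2 + k)) := by
      field_simp
    rw [e]
    gcongr
  exact mul_le_mul hA hB (Real.exp_pos _).le (by positivity)

lemma q_bound {n : ℕ} (hn : 100 ≤ n) (ρ r : ℝ) (h0 : 0 < ρ) (h1 : ρ < 1 / 3) (hr0 : 0 < r)
    (hr : r ≤ n) : 1 - 4 * (ρ + n / r ^ 2) ≤
      Real.sqrt ((n - 3) * r ^ 2 / (n * ((r * (1 + ρ)) ^ 2 + (n - 3)))) := by
  have hn' : (100 : ℝ) ≤ n := by exact_mod_cast hn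
  have hnp : (0 : ℝ) < n := by linarith
  have hk : (0 : ℝ) < n - 3 := by linarith
  set z : ℝ := n / r ^ 2 with hz
  have hz0 : 0 < z := by positivity
  have hz1 : 1 / (n : ℝ) ≤ z := by
    rw [hz, div_le_div_iff₀ hnp (by positivity)]
    nlinarith
  set D : ℝ := (1 + ρ) ^ 2 + (n - 3) / r ^ 2 with hD
  have hDz : (n - 3) / r ^ 2 ≤ z := by rw [hz]; gcongr; linarith
  have hDz0 : 0 < (n - 3) / r ^ 2 := by positivity
  have hD1 : 1 ≤ D := by nlinarith
  have hQ : (n - 3) * r ^ 2 / (n * ((r * (1 + ρ)) ^ 2 + (n - 3))) = (1 - 3 * (1 / (n : ℝ))) * D⁻¹ := by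
    rw [hD]; field_simp
  rw [hQ]
  have hn1 : 0 < 1 / (n : ℝ) := by positivity
  have hn2 : 1 / (n : ℝ) ≤ 1 / 100 := one_div_le_one_div_of_le (by norm_num) hn'
  have hDi : D⁻¹ ≤ 1 := inv_le_one_of_one_le₀ hD1
  have hDi0 : 0 < D⁻¹ := by positivity
  have hDi2 : 1 - (3 * ρ + z) ≤ D⁻¹ := by
    have : D * D⁻¹ = 1 := mul_inv_cancel₀ (by positivity)
    have h5 : D ≤ 1 + (3 * ρ + z) := by nlinarith
    nlinarith
  set Q := (1 - 3 * (1 / (n : ℝ))) * D⁻¹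
  have hQ1 : Q ≤ 1 := by nlinarith
  have hQ0 : 0 ≤ Q := mul_nonneg (by linarith) hDi0.le
  have hQq : Q ≤ Real.sqrt Q := Real.le_sqrt_of_sq_le (by nlinarith)
  have : (1 - 3 * (1 / (n : ℝ))) * (1 - (3 * ρ + z)) ≤ Q :=
    mul_le_mul_of_nonneg_left hDi2 (by linarith)
  nlinarith

/-- the union bound (Lemma 3.4): with probability at least `1 − e^{−5n}`,
simultaneously for all `η ∈ F_ρ` and all `t`,
`F(η,t) ≤ C₆√((n/N)log(1/ρ)) + (1+C₇(ρ+n/r²+(log n)²/n+1/r))(√n/r)φ(q√n t/r)`. -/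
theorem Ffun_union_bound_on_net :
    ∃ C₁ C₂ C' C₆ C₇ : ℝ, 0 < C₁ ∧ 0 < C₂ ∧ 0 < C' ∧ 0 < C₆ ∧ 0 < C₇ ∧
      ∀ n : ℕ, 0 < n → ∀ ρ : ℝ, ρ ∈ Set.Ioo (0 : ℝ) (1 / 3) →
        ∀ N : ℕ, C₁ * n * Real.log (1 / ρ) ≤ N → (N : ℝ) ≤ (n : ℝ) ^ 10 →
          ∀ r : ℝ, C₂ * Real.sqrt n ≤ r → r ≤ n →
            ∃ q : ℝ, 1 - C' * (ρ + n / r ^ 2) ≤ q ∧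
              ENNReal.ofReal (1 - Real.exp (-(5 * n))) ≤
                sphereProduct n N
                  {θ | ∀ η ∈ Fnet n ρ, ∀ t : ℝ,
                    Ffun r t θ η ≤
                      C₆ * Real.sqrt ((n / N) * Real.log (1 / ρ)) +
                        (1 + C₇ * (ρ + n / r ^ 2 + (Real.log n) ^ 2 / n + 1 / r)) *
                          (Real.sqrt n / r) * gphi (q * Real.sqrt n * t / r)} := by
  refine ⟨1, 10, 4, 6, 6, by norm_num, by norm_num, by norm_num, by norm_num, by norm_num, ?_⟩
  rintro n hn ρ ⟨h0, h1⟩ N hN1 hN2 r hr1 hr2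
  have hnp : (0 : ℝ) < n := by exact_mod_cast hn
  have hsn : 0 < Real.sqrt n := Real.sqrt_pos.2 hnp
  have hr0 : 0 < r := by nlinarith
  have hn100 : (100 : ℝ) ≤ n := by
    have h2 := Real.mul_self_sqrt hnp.le
    have h3 : 10 ≤ Real.sqrt n := by
      by_contra hlt
      push Not at hlt
      nlinarith
    nlinarith
  have hn100' : 100 ≤ n := by exact_mod_cast hn100
  set L := Real.log (1 / ρ) with hL
  have hL1 : 1 ≤ L := by
    rw [hL, Real.le_log_iff_exp_le (by positivity)]
    have h2 : 3 ≤ 1 / ρ := by rw [le_div_iff₀ h0]; linarith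
    have := Real.exp_one_lt_d9
    linarith
  have hNp : (0 : ℝ) < N := by nlinarith
  have hNpos : 0 < N := by exact_mod_cast hNp
  set ε := Real.sqrt ((n / N) * L) with hε
  have hε0 : 0 ≤ ε := Real.sqrt_nonneg _
  have hε2 : N * ε ^ 2 = n * L := by
    rw [hε, Real.sq_sqrt (by positivity)]; field_simp
  have hn5 : (0 : ℝ) < (n : ℝ) ^ 5 := by positivity
  have hδ : 1 / (n : ℝ) ^ 5 ≤ ε := by
    apply Real.le_sqrt_of_sq_le
    rw [div_pow, ← pow_mul, one_pow]
    calc 1 / (n : ℝ) ^ (5 * 2) ≤ 1 / N := one_div_le_one_div_of_le hNp hN2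
      _ ≤ n / N * L := by
        rw [div_mul_eq_mul_div]
        gcongr
        nlinarith
  refine ⟨_, q_bound hn100' ρ r h0 h1 hr0 hr2, ?_⟩
  set q := Real.sqrt ((n - 3) * r ^ 2 / (n * ((r * (1 + ρ)) ^ 2 + (n - 3)))) with hq
  have hprob := uniformSphere_prob hn
  have hP : IsProbabilityMeasure (sphereProduct n N) := by
    unfold sphereProduct; infer_instance
  obtain ⟨S, hS, hScard⟩ := net_count n hn ρ h0 h1
  set J : Finset ℤ := Finset.Icc (-((n : ℤ) ^ 11)) ((n : ℤ) ^ 11) with hJ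
  set Ex : EuclideanSpace ℝ (Fin n) → ℝ → ℝ := fun η t =>
    ∫ x, gphi (r * ⟪η, (x : EuclideanSpace ℝ (Fin n))⟫ + t) ∂(uniformSphere n) with hEx
  set bad : Set (Fin N → sphere (0 : EuclideanSpace ℝ (Fin n)) 1) :=
    ⋃ p ∈ S ×ˢ J, {θ | Ex p.1 ((p.2 : ℝ) / (n : ℝ) ^ 5) + 4 * ε ≤
      Ffun r ((p.2 : ℝ) / (n : ℝ) ^ 5) θ p.1} with hbad
  have hbadm : MeasurableSet bad := by
    apply Finset.measurableSet_biUnion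
    intro p _
    apply measurableSet_le measurable_const
    unfold Ffun
    have := gphi_cont.measurable
    fun_prop
  have hJcard : (J.card : ℝ) ≤ Real.exp (13 * n) := by
    have hc : J.card = 2 * n ^ 11 + 1 := by
      rw [hJ, Int.card_Icc]
      zify
      have hnn : (0:ℤ) ≤ (n:ℤ)^11 := by positivity
      rw [Int.toNat_of_nonneg (by linarith)]
      ring
    rw [hc]
    push_cast
    have hen : (n : ℝ) ≤ Real.exp n := by linarith [Real.add_one_le_exp (n : ℝ)]
    have he2 : 3 ≤ Real.exp (2 * n) := by linarith [Real.add_one_le_exp (2 * n : ℝ)]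
    have hp1 : (1 : ℝ) ≤ (n : ℝ) ^ 11 := one_le_pow₀ (by linarith)
    calc 2 * (n : ℝ) ^ 11 + 1 ≤ 3 * (n : ℝ) ^ 11 := by linarith
      _ ≤ Real.exp (2 * n) * (Real.exp n) ^ 11 := by gcongr
      _ = Real.exp (13 * n) := by
        rw [← Real.exp_nat_mul, ← Real.exp_add]; congr 1; push_cast; ring
  have hbadp : (sphereProduct n N).real bad ≤ Real.exp (-(5 * n)) := by
    calc (sphereProduct n N).real bad ≤ ∑ p ∈ S ×ˢ J, (sphereProduct n N).real
          {θ | Ex p.1 ((p.2 : ℝ) / (n : ℝ) ^ 5) + 4 * ε ≤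
            Ffun r ((p.2 : ℝ) / (n : ℝ) ^ 5) θ p.1} := measureReal_biUnion_finset_le _ _
      _ ≤ ∑ p ∈ S ×ˢ J, Real.exp (-(32 * (n * L))) := by
        apply Finset.sum_le_sum
        intro p _
        refine (hoeff hn hNpos r _ (4 * ε) (by positivity) p.1).trans (le_of_eq ?_)
        rw [← hε2]; ring_nf
      _ = S.card * J.card * Real.exp (-(32 * (n * L))) := by
        rw [Finset.sum_const, Finset.card_product, nsmul_eq_mul]; push_cast; ring
      _ ≤ Real.exp (3 * n + n * L) * Real.exp (13 * n) * Real.exp (-(32 * (n * L))) := by gcongr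
      _ ≤ Real.exp (-(5 * n)) := by
        rw [← Real.exp_add, ← Real.exp_add]
        apply Real.exp_le_exp.2
        nlinarith
  have hgood : ENNReal.ofReal (1 - Real.exp (-(5 * n))) ≤ sphereProduct n N badᶜ := by
    rw [← ofReal_measureReal]
    apply ENNReal.ofReal_le_ofReal
    rw [probReal_compl_eq_one_sub hbadm]
    linarith
  refine hgood.trans (measure_mono ?_)
  intro θ hθ η hη t
  have hηS := hS hη
  obtain ⟨⟨hηa, hηb⟩, -⟩ := hη
  rw [mem_closedBall_zero_iff] at hηa hηb
  push Not at hηb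
  have hR0 : 0 ≤ ρ + n / r ^ 2 + (Real.log n) ^ 2 / n + 1 / r := by positivity
  rcases le_or_gt ((n : ℝ) ^ 6) |t| with ht | ht
  · have h2 := Ffun_large hn100' hNpos r t hr0.le hr2 θ η (by linarith) ht
    have h3 : 0 ≤ (1 + 6 * (ρ + n / r ^ 2 + (Real.log n) ^ 2 / n + 1 / r)) *
        (Real.sqrt n / r) * gphi (q * Real.sqrt n * t / r) :=
      mul_nonneg (by positivity) (gphi_nonneg _)
    linarith
  · set j : ℤ := ⌊t * (n : ℝ) ^ 5⌋ with hj
    have hjl : (j : ℝ) ≤ t * (n : ℝ) ^ 5 := Int.floor_le _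
    have hju : t * (n : ℝ) ^ 5 < j + 1 := Int.lt_floor_add_one _
    obtain ⟨ht1, ht2⟩ := abs_lt.1 ht
    have e11 : (n : ℝ) ^ 11 = (n : ℝ) ^ 6 * (n : ℝ) ^ 5 := by ring
    have hjJ : j ∈ J := by
      rw [hJ, Finset.mem_Icc]
      constructor
      · rw [hj, Int.le_floor]
        push_cast
        rw [e11]
        nlinarith
      · have : (j : ℝ) ≤ (n : ℝ) ^ 11 := by rw [e11]; nlinarith
        exact_mod_cast this
    have hdist : |t - (j : ℝ) / (n : ℝ) ^ 5| ≤ 1 / (n : ℝ) ^ 5 := by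
      have e : t - (j : ℝ) / (n : ℝ) ^ 5 = (t * (n : ℝ) ^ 5 - j) / (n : ℝ) ^ 5 := by
        field_simp
      rw [e, abs_div, abs_of_pos hn5]
      gcongr
      rw [abs_le]
      constructor <;> linarith
    have hnb : Ffun r ((j : ℝ) / (n : ℝ) ^ 5) θ η < Ex η ((j : ℝ) / (n : ℝ) ^ 5) + 4 * ε := by
      by_contra hc
      push Not at hc
      apply hθ
      rw [hbad]
      simp only [mem_iUnion]
      exact ⟨(η, j), Finset.mem_product.2 ⟨hηS, hjJ⟩, hc⟩
    have l1 := Ffun_lip hNpos r t ((j : ℝ) / (n : ℝ) ^ 5) θ η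
    have l2 := expect_lip hn r ((j : ℝ) / (n : ℝ) ^ 5) t η
    rw [abs_sub_comm] at l2
    have l3 := expect_final hn100' ρ r t h0 h1 hr0 η hηa hηb
    have l4 : (1 + 6 * ρ) * (Real.sqrt n / r) * gphi (q * Real.sqrt n * t / r) ≤
        (1 + 6 * (ρ + n / r ^ 2 + (Real.log n) ^ 2 / n + 1 / r)) *
        (Real.sqrt n / r) * gphi (q * Real.sqrt n * t / r) := by
      have hg := gphi_nonneg (q * Real.sqrt n * t / r)
      have hsum : ρ ≤ ρ + n / r ^ 2 + (Real.log n) ^ 2 / n + 1 / r := by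
        have a1 : 0 ≤ n / r ^ 2 := by positivity
        have a2 : 0 ≤ (Real.log n) ^ 2 / n := by positivity
        have a3 : 0 ≤ 1 / r := by positivity
        linarith
      gcongr
    simp only [hEx] at hnb
    linarith
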